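/- Let two ESRs i and j have individual feasible sets S_i, S_j (with their own efficiencies, ramp limits, SOC limits and capacity limits) and bid curves f^D_{i,t}, f^C_{i,t}, f^D_{j,t}, f^C_{j,t} (discharge curves convex differentiable, charge curves concave differentiable). Let realized dispatches (g^D_i, g^C_i, E_i) ∈ S_i and (g^D_j, g^C_j, E_j) ∈ S_j be given, and suppose there is an interval t* ∈ {1,…,T} at which both ESRs are marginal: for each k ∈ {i, j}, either 0 < g^D_{k,t*} < ḡ^D_k (strictly discharging within capacity) or 0 < g^C_{k,t*} < ḡ^C_k (strictly charging within capacity), with the corresponding ramp constraints between intervals t*−1 and t* and between t* and t*+1 strictly nonbinding, and E̲_k < E_{k,t'} < Ē_k for all t' ≥ t*. Define the marginal bid-in price m_k = (f^D_{k,t*})'(g^D_{k,t*}) if k is discharging at t* and m_k = (f^C_{k,t*})'(g^C_{k,t*}) if k is charging at t*. If m_i ≠ m_j, then for every uniform price vector π ∈ ℝ^T, at least one of LOC_i(π) > 0 or LOC_j(π) > 0 holds; i.e., no uniform pricing scheme yields zero lost opportunity cost for both ESRs. -/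

import Mathlib

/-- Parameters of a (generalized) energy storage resource (ESR):
discharge/charge efficiencies, initial SOC and initial charge/discharge
levels, ramp limits, SOC limits and capacity limits. -/
structure ESRParams where
  xiD : ℝ
  xiC : ℝ
  hxiD : xiD ∈ Set.Ioc (0 : ℝ) 1
  hxiC : xiC ∈ Set.Ioc (0 : ℝ) 1
  E0 : ℝ
  pD0 : ℝ
  pC0 : ℝ
  rDup : ℝ
  rDdn : ℝ
  rCup : ℝ
  rCdn : ℝ
  hrDup : 0 ≤ rDup
  hrDdn : 0 ≤ rDdn
  hrCup : 0 ≤ rCup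
  hrCdn : 0 ≤ rCdn
  Elo : ℝ
  Ehi : ℝ
  hElim : Elo ≤ Ehi
  gDmax : ℝ
  gCmax : ℝ
  hgD : 0 < gDmax
  hgC : 0 < gCmax

/-- The individual feasible set `S` of the ESR over horizon `T`
(intervals `t = 1, …, T`; index `0` carries the initial conditions):
SOC transition, ramp constraints, SOC limits and capacity limits. -/
def Feasible (T : ℕ) (P : ESRParams) (pD pC e : ℕ → ℝ) : Prop :=
  pD 0 = P.pD0 ∧ pC 0 = P.pC0 ∧ e 0 = P.E0 ∧
  ∀ t ∈ Finset.Icc 1 T,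
    e t - e (t - 1) = P.xiC * pC t - pD t / P.xiD ∧
    -P.rDdn ≤ pD t - pD (t - 1) ∧ pD t - pD (t - 1) ≤ P.rDup ∧
    -P.rCdn ≤ pC t - pC (t - 1) ∧ pC t - pC (t - 1) ≤ P.rCup ∧
    P.Elo ≤ e t ∧ e t ≤ P.Ehi ∧
    0 ≤ pD t ∧ pD t ≤ P.gDmax ∧
    0 ≤ pC t ∧ pC t ≤ P.gCmax

/-- Profit of the ESR under (possibly distinct) discharge/charge price
sequences `piD, piC`, with bid curves `fD` (discharge cost) and `fC`
(charging benefit).  For a uniform price `π`, take `piD = piC = π`. -/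
def profit (T : ℕ) (piD piC : ℕ → ℝ) (fD fC : ℕ → ℝ → ℝ)
    (pD pC : ℕ → ℝ) : ℝ :=
  ∑ t ∈ Finset.Icc 1 T,
    (piD t * pD t - piC t * pC t - fD t (pD t) + fC t (pC t))

/-- The ESR is "marginal" in discharging at interval `t`: discharge strictly
within capacity, discharge ramp constraints strictly nonbinding between
`t-1` and `t` and between `t` and `t+1` (the latter only required when
`t < T`), and SOC strictly interior from `t` to the end of the horizon. -/
def MarginalD (T : ℕ) (P : ESRParams) (gD e : ℕ → ℝ) (t : ℕ) : Prop :=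
  0 < gD t ∧ gD t < P.gDmax ∧
  (-P.rDdn < gD t - gD (t - 1) ∧ gD t - gD (t - 1) < P.rDup) ∧
  (t < T → -P.rDdn < gD (t + 1) - gD t ∧ gD (t + 1) - gD t < P.rDup) ∧
  (∀ t', t ≤ t' → t' ≤ T → P.Elo < e t' ∧ e t' < P.Ehi)

/-- The ESR is "marginal" in charging at interval `t`. -/
def MarginalC (T : ℕ) (P : ESRParams) (gC e : ℕ → ℝ) (t : ℕ) : Prop :=
  0 < gC t ∧ gC t < P.gCmax ∧
  (-P.rCdn < gC t - gC (t - 1) ∧ gC t - gC (t - 1) < P.rCup) ∧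
  (t < T → -P.rCdn < gC (t + 1) - gC t ∧ gC (t + 1) - gC t < P.rCup) ∧
  (∀ t', t ≤ t' → t' ≤ T → P.Elo < e t' ∧ e t' < P.Ehi)

/-- The set of profits attainable over the feasible set `S`. -/
def profitSet (T : ℕ) (P : ESRParams) (piD piC : ℕ → ℝ)
    (fD fC : ℕ → ℝ → ℝ) : Set ℝ :=
  {x | ∃ pD pC e, Feasible T P pD pC e ∧ x = profit T piD piC fD fC pD pC}

/-- `Q(π) = sup` of the profit over the feasible set `S`. -/
noncomputable def Qmax (T : ℕ) (P : ESRParams) (piD piC : ℕ → ℝ)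
    (fD fC : ℕ → ℝ → ℝ) : ℝ :=
  sSup (profitSet T P piD piC fD fC)

/-- Lost opportunity cost of a dispatch: `LOC(π) = Q(π) − profit(π; ·)`. -/
noncomputable def LOC (T : ℕ) (P : ESRParams) (piD piC : ℕ → ℝ)
    (fD fC : ℕ → ℝ → ℝ) (pD pC : ℕ → ℝ) : ℝ :=
  Qmax T P piD piC fD fC - profit T piD piC fD fC pD pC

/-!
If the lost opportunity cost is not positive, the given dispatch maximizes profit over the feasible
set. At a marginal interval `s` the power in the marginal direction can be moved slightly up or
down, shifting the state of charge by a constant from `s` on, without leaving the feasible set. The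
dispatch is therefore a stationary point of the profit in that single variable, so the price at `s`
equals the marginal bid-in price. A common price cannot equal two different bid-in prices.
-/

section StorageDispatch

open Filter Topology

/-- A trajectory of charging or discharging powers which starts at `p₀` and obeys the ramp limits
and the capacity limit in the intervals `1, …, T`. -/
def PowerFeasible (T : ℕ) (p₀ rdn rup cap : ℝ) (p : ℕ → ℝ) : Prop :=
  p 0 = p₀ ∧ ∀ t ∈ Finset.Icc 1 T,
    p t - p (t - 1) ∈ Set.Icc (-rdn) rup ∧ p t ∈ Set.Icc 0 cap

/-- The capacity and ramp limits involving interval `s` are not binding; the ramp into `s + 1` is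
considered only if `s + 1` belongs to the horizon. -/
def PowerSlackAt (T : ℕ) (rdn rup cap : ℝ) (p : ℕ → ℝ) (s : ℕ) : Prop :=
  p s ∈ Set.Ioo 0 cap ∧ p s - p (s - 1) ∈ Set.Ioo (-rdn) rup ∧
    (s < T → p (s + 1) - p s ∈ Set.Ioo (-rdn) rup)

/-- A state-of-charge trajectory `e` which starts at `e₀`, accumulates the energy `u t` in each
interval `t`, and stays within its limits. -/
def SOCFeasible (T : ℕ) (e₀ lo hi : ℝ) (u e : ℕ → ℝ) : Prop :=
  e 0 = e₀ ∧ ∀ t ∈ Finset.Icc 1 T, e t - e (t - 1) = u t ∧ e t ∈ Set.Icc lo hi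

/-- The energy added to the storage in each interval, net of conversion losses. -/
noncomputable def netCharge (P : ESRParams) (pD pC : ℕ → ℝ) (t : ℕ) : ℝ :=
  P.xiC * pC t - pD t / P.xiD

theorem feasible_iff {T : ℕ} {P : ESRParams} {pD pC e : ℕ → ℝ} :
    Feasible T P pD pC e ↔
      PowerFeasible T P.pD0 P.rDdn P.rDup P.gDmax pD ∧
      PowerFeasible T P.pC0 P.rCdn P.rCup P.gCmax pC ∧
      SOCFeasible T P.E0 P.Elo P.Ehi (netCharge P pD pC) e := by
  simp only [Feasible, PowerFeasible, SOCFeasible, netCharge, Set.mem_Icc]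
  grind

theorem MarginalD.powerSlackAt {T s : ℕ} {P : ESRParams} {gD e : ℕ → ℝ}
    (h : MarginalD T P gD e s) : PowerSlackAt T P.rDdn P.rDup P.gDmax gD s :=
  ⟨⟨h.1, h.2.1⟩, h.2.2.1, h.2.2.2.1⟩

theorem MarginalC.powerSlackAt {T s : ℕ} {P : ESRParams} {gC e : ℕ → ℝ}
    (h : MarginalC T P gC e s) : PowerSlackAt T P.rCdn P.rCup P.gCmax gC s :=
  ⟨⟨h.1, h.2.1⟩, h.2.2.1, h.2.2.2.1⟩

theorem PowerFeasible.eventually_update {T s : ℕ} {p₀ rdn rup cap : ℝ} {p : ℕ → ℝ}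
    (hp : PowerFeasible T p₀ rdn rup cap p) (hs : s ≠ 0)
    (hslack : PowerSlackAt T rdn rup cap p s) :
    ∀ᶠ x in 𝓝 (p s), PowerFeasible T p₀ rdn rup cap (Function.update p s x) := by
  obtain ⟨hcap, hramp, hramp_succ⟩ := hslack
  refine Filter.Eventually.and (.of_forall fun x => ?_) ?_
  · rw [Function.update_of_ne hs.symm, hp.1]
  refine (eventually_all_finset _).2 fun t ht => ?_
  obtain ⟨ht₁, htT⟩ := Finset.mem_Icc.1 ht
  obtain ⟨hramp_t, hcap_t⟩ := hp.2 t ht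
  rcases eq_or_ne t s with rfl | hts
  · simp only [Function.update_self, Function.update_of_ne (show t - 1 ≠ t by lia)]
    exact ((continuous_sub_right _).continuousAt.eventually_mem
      (Icc_mem_nhds hramp.1 hramp.2)).and (Icc_mem_nhds hcap.1 hcap.2)
  simp only [Function.update_of_ne hts, hcap_t, and_true]
  rcases eq_or_ne (t - 1) s with rfl | hts'
  · have hramp_t' : p t - p (t - 1) ∈ Set.Ioo (-rdn) rup := by
      simpa only [Nat.sub_add_cancel ht₁] using hramp_succ (by lia)
    simp only [Function.update_self]
    exact (continuous_sub_left _).continuousAt.eventually_mem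
      (Icc_mem_nhds hramp_t'.1 hramp_t'.2)
  · simp only [Function.update_of_ne hts', hramp_t, eventually_const]

theorem SOCFeasible.eventually_exists_update {T s : ℕ} {e₀ lo hi : ℝ} {u e : ℕ → ℝ}
    (he : SOCFeasible T e₀ lo hi u e) (hs : s ≠ 0)
    (hslack : ∀ t, s ≤ t → t ≤ T → e t ∈ Set.Ioo lo hi) :
    ∀ᶠ v in 𝓝 (u s), ∃ e', SOCFeasible T e₀ lo hi (Function.update u s v) e' := by
  let shifted (v : ℝ) (t : ℕ) : ℝ := if s ≤ t then e t + (v - u s) else e t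
  have hbounds : ∀ᶠ v in 𝓝 (u s), ∀ t ∈ Finset.Icc 1 T, shifted v t ∈ Set.Icc lo hi := by
    refine (eventually_all_finset _).2 fun t ht => ?_
    by_cases hst : s ≤ t
    · simp only [shifted, if_pos hst]
      have hlim : Tendsto (fun v => e t + (v - u s)) (𝓝 (u s)) (𝓝 (e t)) :=
        Continuous.tendsto' (by fun_prop) _ _ (by ring)
      obtain ⟨hlo, hhi⟩ := hslack t hst (Finset.mem_Icc.1 ht).2
      exact hlim.eventually_mem (Icc_mem_nhds hlo hhi)
    · simp only [shifted, if_neg hst, (he.2 t ht).2, eventually_const]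
  filter_upwards [hbounds] with v hv
  refine ⟨shifted v, by simp only [shifted, nonpos_iff_eq_zero, hs, if_false, he.1],
    fun t ht => ⟨?_, hv t ht⟩⟩
  have ht₁ := (Finset.mem_Icc.1 ht).1
  have hbalance := (he.2 t ht).1
  simp only [shifted]
  rcases lt_trichotomy t s with hts | rfl | hst
  · rw [if_neg (by lia), if_neg (by lia), Function.update_of_ne hts.ne, hbalance]
  · rw [if_pos le_rfl, if_neg (by lia), Function.update_self]
    linarith
  · rw [if_pos (by lia), if_pos (by lia), Function.update_of_ne hst.ne']
    linarith

theorem netCharge_update_left (P : ESRParams) (pD pC : ℕ → ℝ) (s : ℕ) (x : ℝ) :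
    netCharge P (Function.update pD s x) pC =
      Function.update (netCharge P pD pC) s (P.xiC * pC s - x / P.xiD) :=
  funext (Function.apply_update (fun t y => P.xiC * pC t - y / P.xiD) pD s x)

theorem netCharge_update_right (P : ESRParams) (pD pC : ℕ → ℝ) (s : ℕ) (x : ℝ) :
    netCharge P pD (Function.update pC s x) =
      Function.update (netCharge P pD pC) s (P.xiC * x - pD s / P.xiD) :=
  funext (Function.apply_update (fun t y => P.xiC * y - pD t / P.xiD) pC s x)

theorem MarginalD.eventually_feasible_update {T s : ℕ} {P : ESRParams} {gD gC e : ℕ → ℝ}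
    (hm : MarginalD T P gD e s) (hg : Feasible T P gD gC e) (hs : s ≠ 0) :
    ∀ᶠ x in 𝓝 (gD s), ∃ e', Feasible T P (Function.update gD s x) gC e' := by
  obtain ⟨hD, hC, hE⟩ := feasible_iff.1 hg
  have hlim : Tendsto (fun x => P.xiC * gC s - x / P.xiD) (𝓝 (gD s))
      (𝓝 (netCharge P gD gC s)) :=
    Continuous.tendsto (by fun_prop) _
  filter_upwards [hD.eventually_update hs hm.powerSlackAt,
    hlim.eventually (hE.eventually_exists_update hs hm.2.2.2.2)] with x hDx ⟨e', hEx⟩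
  exact ⟨e', feasible_iff.2 ⟨hDx, hC, netCharge_update_left P gD gC s x ▸ hEx⟩⟩

theorem MarginalC.eventually_feasible_update {T s : ℕ} {P : ESRParams} {gD gC e : ℕ → ℝ}
    (hm : MarginalC T P gC e s) (hg : Feasible T P gD gC e) (hs : s ≠ 0) :
    ∀ᶠ x in 𝓝 (gC s), ∃ e', Feasible T P gD (Function.update gC s x) e' := by
  obtain ⟨hD, hC, hE⟩ := feasible_iff.1 hg
  have hlim : Tendsto (fun x => P.xiC * x - gD s / P.xiD) (𝓝 (gC s))
      (𝓝 (netCharge P gD gC s)) :=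
    Continuous.tendsto (by fun_prop) _
  filter_upwards [hC.eventually_update hs hm.powerSlackAt,
    hlim.eventually (hE.eventually_exists_update hs hm.2.2.2.2)] with x hCx ⟨e', hEx⟩
  exact ⟨e', feasible_iff.2 ⟨hD, hCx, netCharge_update_right P gD gC s x ▸ hEx⟩⟩

/-- Value of the trajectory `p` at prices `π`, net of the bid curves `f`. Discharging contributes
this surplus to the profit, charging its negative. -/
def priceSurplus (T : ℕ) (π : ℕ → ℝ) (f : ℕ → ℝ → ℝ) (p : ℕ → ℝ) : ℝ :=
  ∑ t ∈ Finset.Icc 1 T, (π t * p t - f t (p t))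

theorem profit_eq_priceSurplus_sub (T : ℕ) (piD piC : ℕ → ℝ) (fD fC : ℕ → ℝ → ℝ)
    (pD pC : ℕ → ℝ) :
    profit T piD piC fD fC pD pC = priceSurplus T piD fD pD - priceSurplus T piC fC pC := by
  rw [profit, priceSurplus, priceSurplus, ← Finset.sum_sub_distrib]
  exact Finset.sum_congr rfl fun t _ => by ring

theorem hasDerivAt_priceSurplus_update {T s : ℕ} {π : ℕ → ℝ} {f : ℕ → ℝ → ℝ} {p : ℕ → ℝ} {m : ℝ}
    (hs : s ∈ Finset.Icc 1 T) (hf : HasDerivAt (f s) m (p s)) :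
    HasDerivAt (fun x => priceSurplus T π f (Function.update p s x)) (π s - m) (p s) := by
  have hsplit (x : ℝ) : priceSurplus T π f (Function.update p s x) =
      (π s * x - f s x) + ∑ t ∈ Finset.Icc 1 T \ {s}, (π t * p t - f t (p t)) := by
    simp only [priceSurplus, Function.apply_update (fun t y => π t * y - f t y),
      Finset.sum_update_of_mem hs]
  simp only [hsplit]
  exact ((hasDerivAt_const_mul (π s)).sub hf).add_const _

theorem price_eq_of_isLocalExtr_priceSurplus {T s : ℕ} {π : ℕ → ℝ} {f : ℕ → ℝ → ℝ} {p : ℕ → ℝ}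
    {m : ℝ} (hs : s ∈ Finset.Icc 1 T) (hf : HasDerivAt (f s) m (p s))
    (hext : IsLocalExtr (fun x => priceSurplus T π f (Function.update p s x)) (p s)) :
    π s = m :=
  sub_eq_zero.1 (hext.hasDerivAt_eq_zero (hasDerivAt_priceSurplus_update hs hf))

theorem exists_abs_priceSurplus_le {T : ℕ} {π : ℕ → ℝ} {f : ℕ → ℝ → ℝ} {K : Set ℝ}
    (hK : IsCompact K) (hf : ∀ t ∈ Finset.Icc 1 T, ContinuousOn (f t) K) :
    ∃ B, ∀ p : ℕ → ℝ, (∀ t ∈ Finset.Icc 1 T, p t ∈ K) → |priceSurplus T π f p| ≤ B := by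
  have hterm : ∀ t ∈ Finset.Icc 1 T, ∃ b, ∀ y ∈ K, ‖π t * y - f t y‖ ≤ b := fun t ht =>
    hK.exists_bound_of_continuousOn ((continuous_const_mul _).continuousOn.sub (hf t ht))
  choose! b hb using hterm
  exact ⟨∑ t ∈ Finset.Icc 1 T, b t, fun p hp =>
    norm_sum_le_of_le _ fun t ht => hb t ht (p t) (hp t ht)⟩

theorem bddAbove_profitSet {T : ℕ} {P : ESRParams} {piD piC : ℕ → ℝ} {fD fC : ℕ → ℝ → ℝ}
    (hfD : ∀ t ∈ Finset.Icc 1 T, ContinuousOn (fD t) (Set.Icc 0 P.gDmax))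
    (hfC : ∀ t ∈ Finset.Icc 1 T, ContinuousOn (fC t) (Set.Icc 0 P.gCmax)) :
    BddAbove (profitSet T P piD piC fD fC) := by
  obtain ⟨BD, hBD⟩ := exists_abs_priceSurplus_le (π := piD) isCompact_Icc hfD
  obtain ⟨BC, hBC⟩ := exists_abs_priceSurplus_le (π := piC) isCompact_Icc hfC
  refine ⟨BD + BC, ?_⟩
  rintro _ ⟨pD, pC, e, hfeas, rfl⟩
  obtain ⟨hD, hC, -⟩ := feasible_iff.1 hfeas
  rw [profit_eq_priceSurplus_sub]
  linarith [(abs_le.1 (hBD pD fun t ht => (hD.2 t ht).2)).2,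
    (abs_le.1 (hBC pC fun t ht => (hC.2 t ht).2)).1]

section SingleStorage

variable {T s : ℕ} {P : ESRParams} {piD piC : ℕ → ℝ} {fD fC : ℕ → ℝ → ℝ} {gD gC e : ℕ → ℝ} {m : ℝ}

theorem Feasible.profit_le_of_LOC_nonpos {pD pC : ℕ → ℝ} (hp : Feasible T P pD pC e)
    (hbdd : BddAbove (profitSet T P piD piC fD fC)) (hLOC : LOC T P piD piC fD fC gD gC ≤ 0) :
    profit T piD piC fD fC pD pC ≤ profit T piD piC fD fC gD gC :=
  (le_csSup hbdd ⟨pD, pC, e, hp, rfl⟩).trans (sub_nonpos.1 hLOC)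

theorem MarginalD.price_eq_of_LOC_nonpos (hm : MarginalD T P gD e s)
    (hg : Feasible T P gD gC e) (hs : s ∈ Finset.Icc 1 T) (hderiv : HasDerivAt (fD s) m (gD s))
    (hbdd : BddAbove (profitSet T P piD piC fD fC)) (hLOC : LOC T P piD piC fD fC gD gC ≤ 0) :
    piD s = m := by
  have hs₀ : s ≠ 0 := Nat.one_le_iff_ne_zero.1 (Finset.mem_Icc.1 hs).1
  have hmax : IsLocalMax (fun x => priceSurplus T piD fD (Function.update gD s x)) (gD s) := by
    filter_upwards [hm.eventually_feasible_update hg hs₀] with x ⟨e', hx⟩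
    have hle := hx.profit_le_of_LOC_nonpos hbdd hLOC
    rw [profit_eq_priceSurplus_sub, profit_eq_priceSurplus_sub] at hle
    rw [Function.update_eq_self]
    exact (sub_le_sub_iff_right _).1 hle
  exact price_eq_of_isLocalExtr_priceSurplus hs hderiv hmax.isExtr

theorem MarginalC.price_eq_of_LOC_nonpos (hm : MarginalC T P gC e s)
    (hg : Feasible T P gD gC e) (hs : s ∈ Finset.Icc 1 T) (hderiv : HasDerivAt (fC s) m (gC s))
    (hbdd : BddAbove (profitSet T P piD piC fD fC)) (hLOC : LOC T P piD piC fD fC gD gC ≤ 0) :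
    piC s = m := by
  have hs₀ : s ≠ 0 := Nat.one_le_iff_ne_zero.1 (Finset.mem_Icc.1 hs).1
  have hmin : IsLocalMin (fun x => priceSurplus T piC fC (Function.update gC s x)) (gC s) := by
    filter_upwards [hm.eventually_feasible_update hg hs₀] with x ⟨e', hx⟩
    have hle := hx.profit_le_of_LOC_nonpos hbdd hLOC
    rw [profit_eq_priceSurplus_sub, profit_eq_priceSurplus_sub] at hle
    rw [Function.update_eq_self]
    exact (sub_le_sub_iff_left _).1 hle
  exact price_eq_of_isLocalExtr_priceSurplus hs hderiv hmin.isExtr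

/-- `m` is a marginal bid-in price of the dispatch in interval `s`: the slope of the bid curve in a
direction, discharging or charging, in which the storage is marginal. Both directions may qualify,
so `m` need not be unique. -/
def IsMarginalBidPrice (T : ℕ) (P : ESRParams) (fD fC : ℕ → ℝ → ℝ) (gD gC e : ℕ → ℝ) (s : ℕ)
    (m : ℝ) : Prop :=
  (MarginalD T P gD e s ∧ HasDerivAt (fD s) m (gD s)) ∨
    (MarginalC T P gC e s ∧ HasDerivAt (fC s) m (gC s))

theorem IsMarginalBidPrice.of_deriv (hfD : DifferentiableAt ℝ (fD s) (gD s))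
    (hfC : DifferentiableAt ℝ (fC s) (gC s))
    (h : (MarginalD T P gD e s ∧ m = deriv (fD s) (gD s)) ∨
      (MarginalC T P gC e s ∧ m = deriv (fC s) (gC s))) :
    IsMarginalBidPrice T P fD fC gD gC e s m :=
  h.imp (And.imp_right fun hm => by rw [hm]; exact hfD.hasDerivAt)
    (And.imp_right fun hm => by rw [hm]; exact hfC.hasDerivAt)

theorem IsMarginalBidPrice.price_eq_of_LOC_nonpos {π : ℕ → ℝ}
    (hm : IsMarginalBidPrice T P fD fC gD gC e s m) (hg : Feasible T P gD gC e)
    (hs : s ∈ Finset.Icc 1 T) (hbdd : BddAbove (profitSet T P π π fD fC))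
    (hLOC : LOC T P π π fD fC gD gC ≤ 0) : π s = m := by
  rcases hm with ⟨hD, hderiv⟩ | ⟨hC, hderiv⟩
  · exact hD.price_eq_of_LOC_nonpos hg hs hderiv hbdd hLOC
  · exact hC.price_eq_of_LOC_nonpos hg hs hderiv hbdd hLOC

end SingleStorage

end StorageDispatch

theorem no_uniform_price_zero_LOC_general
    (T : ℕ) (Pi Pj : ESRParams)
    (fDi fCi fDj fCj : ℕ → ℝ → ℝ)
    (hfDi : ∀ t ∈ Finset.Icc 1 T, ContinuousOn (fDi t) (Set.Icc 0 Pi.gDmax))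
    (hfCi : ∀ t ∈ Finset.Icc 1 T, ContinuousOn (fCi t) (Set.Icc 0 Pi.gCmax))
    (hfDj : ∀ t ∈ Finset.Icc 1 T, ContinuousOn (fDj t) (Set.Icc 0 Pj.gDmax))
    (hfCj : ∀ t ∈ Finset.Icc 1 T, ContinuousOn (fCj t) (Set.Icc 0 Pj.gCmax))
    (gDi gCi Ei gDj gCj Ej : ℕ → ℝ)
    (hfeasi : Feasible T Pi gDi gCi Ei)
    (hfeasj : Feasible T Pj gDj gCj Ej)
    (tstar : ℕ) (htstar : tstar ∈ Finset.Icc 1 T)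
    (mi mj : ℝ)
    (hi : IsMarginalBidPrice T Pi fDi fCi gDi gCi Ei tstar mi)
    (hj : IsMarginalBidPrice T Pj fDj fCj gDj gCj Ej tstar mj)
    (hne : mi ≠ mj) (π : ℕ → ℝ) :
    0 < LOC T Pi π π fDi fCi gDi gCi ∨ 0 < LOC T Pj π π fDj fCj gDj gCj := by
  by_contra! ⟨hLOCi, hLOCj⟩
  have hpi : π tstar = mi :=
    hi.price_eq_of_LOC_nonpos hfeasi htstar (bddAbove_profitSet hfDi hfCi) hLOCi
  have hpj : π tstar = mj :=
    hj.price_eq_of_LOC_nonpos hfeasj htstar (bddAbove_profitSet hfDj hfCj) hLOCj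
  exact hne (hpi.symm.trans hpj)

/-!
STATEMENT 5 (Theorem 1 of the paper).

Two ESRs `i` and `j` with their own feasible sets and bid curves are both
marginal (each either in the discharge or in the charge direction) at some
interval `t*`, with marginal bid-in prices `mi ≠ mj`.  Then for every
uniform price vector `π`, at least one of the two ESRs has strictly
positive lost opportunity cost. -/
theorem no_uniform_price_zero_LOC
    (T : ℕ) (Pi Pj : ESRParams)
    (fDi fCi fDj fCj : ℕ → ℝ → ℝ)
    (hfDiconv : ∀ t, ConvexOn ℝ Set.univ (fDi t))
    (hfDidiff : ∀ t, Differentiable ℝ (fDi t))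
    (hfCiconc : ∀ t, ConcaveOn ℝ Set.univ (fCi t))
    (hfCidiff : ∀ t, Differentiable ℝ (fCi t))
    (hfDjconv : ∀ t, ConvexOn ℝ Set.univ (fDj t))
    (hfDjdiff : ∀ t, Differentiable ℝ (fDj t))
    (hfCjconc : ∀ t, ConcaveOn ℝ Set.univ (fCj t))
    (hfCjdiff : ∀ t, Differentiable ℝ (fCj t))
    (gDi gCi Ei gDj gCj Ej : ℕ → ℝ)
    (hfeasi : Feasible T Pi gDi gCi Ei)
    (hfeasj : Feasible T Pj gDj gCj Ej)
    (tstar : ℕ) (ht1 : 1 ≤ tstar) (htT : tstar ≤ T)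
    -- marginal bid-in prices of the two ESRs at t*
    (mi mj : ℝ)
    (hi : (MarginalD T Pi gDi Ei tstar ∧ mi = deriv (fDi tstar) (gDi tstar)) ∨
          (MarginalC T Pi gCi Ei tstar ∧ mi = deriv (fCi tstar) (gCi tstar)))
    (hj : (MarginalD T Pj gDj Ej tstar ∧ mj = deriv (fDj tstar) (gDj tstar)) ∨
          (MarginalC T Pj gCj Ej tstar ∧ mj = deriv (fCj tstar) (gCj tstar)))
    (hne : mi ≠ mj) :
    ∀ π : ℕ → ℝ,
      0 < LOC T Pi π π fDi fCi gDi gCi ∨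
      0 < LOC T Pj π π fDj fCj gDj gCj := by
  exact no_uniform_price_zero_LOC_general T Pi Pj fDi fCi fDj fCj
    (fun t _ => (hfDidiff t).continuous.continuousOn)
    (fun t _ => (hfCidiff t).continuous.continuousOn)
    (fun t _ => (hfDjdiff t).continuous.continuousOn)
    (fun t _ => (hfCjdiff t).continuous.continuousOn)
    gDi gCi Ei gDj gCj Ej hfeasi hfeasj tstar (Finset.mem_Icc.2 ⟨ht1, htT⟩) mi mj
    (.of_deriv (hfDidiff tstar _) (hfCidiff tstar _) hi)
    (.of_deriv (hfDjdiff tstar _) (hfCjdiff tstar _) hj) hne
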